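/- arXiv:2504.00821 — 9 statements merged into one kernel-verified Lean document; each statement's English description precedes it below -/
import Mathlib

section
/- Let R be an integral domain of characteristic zero and let δ ∈ R be nonzero. If λ : R[X] → R is an R-linear map such that λ((X + C δ)^N − X^N) = 0 for every integer N ≥ 1 (where C δ denotes the constant polynomial δ), then λ(P) = 0 for every polynomial P ∈ R[X]. -/
/-!
Modulo powers of `X` below `X ^ n`, the difference `(X + C δ) ^ (n + 1) - X ^ (n + 1)` is
`(n + 1) * δ * X ^ n`. By strong induction on `n`, a linear map killing all these differences
therefore kills `X ^ n`, because `n + 1` and `δ` can be cancelled in its codomain.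
-/

section

open Polynomial Finset

variable {R M : Type*} [Ring R] [AddCommGroup M] [Module R M]

theorem X_add_C_pow_sub_X_pow_eq_sum (r : R) (n : ℕ) :
    (X + C r) ^ n - X ^ n = ∑ m ∈ range n, n.choose m • r ^ (n - m) • (X : R[X]) ^ m := by
  rw [(commute_X (C r)).add_pow, sum_range_succ]
  simp only [Nat.sub_self, pow_zero, mul_one, Nat.choose_self, Nat.cast_one, add_sub_cancel_right]
  refine sum_congr rfl fun m _ ↦ ?_
  rw [← C_pow, X_pow_mul_C, ← smul_eq_C_mul, ← nsmul_eq_mul']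

theorem map_X_add_C_pow_succ_sub_X_pow (f : R[X] →ₗ[R] M) (r : R) {n : ℕ}
    (hf : ∀ m < n, f (X ^ m) = 0) :
    f ((X + C r) ^ (n + 1) - X ^ (n + 1)) = (n + 1) • r • f (X ^ n) := by
  have lower_terms : ∑ m ∈ range n, (n + 1).choose m • r ^ (n + 1 - m) • f (X ^ m) = 0 :=
    sum_eq_zero fun m hm ↦ by rw [hf m (mem_range.mp hm), smul_zero, smul_zero]
  simp only [X_add_C_pow_sub_X_pow_eq_sum, map_sum, map_nsmul, map_smul]
  rw [sum_range_succ, lower_terms, zero_add, Nat.choose_succ_self_right, Nat.add_sub_cancel_left,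
    pow_one]

theorem abelian_ihara_dual_vanishing_general [IsAddTorsionFree M] {δ : R}
    (hδ : IsSMulRegular M δ) (lam : R[X] →ₗ[R] M)
    (h : ∀ N : ℕ, 1 ≤ N → lam ((X + C δ) ^ N - X ^ N) = 0) (P : R[X]) : lam P = 0 := by
  have map_X_pow (n : ℕ) : lam (X ^ n) = 0 := by
    induction n using Nat.strong_induction_on with
    | _ n ih =>
      have h_leading : (n + 1) • δ • lam (X ^ n) = 0 := by
        rw [← map_X_add_C_pow_succ_sub_X_pow lam δ ih, h (n + 1) n.succ_pos]
      exact hδ.right_eq_zero_of_smul ((smul_eq_zero_iff_right n.succ_ne_zero).mp h_leading)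
  rw [P.as_sum_range_C_mul_X_pow, map_sum]
  exact sum_eq_zero fun m _ ↦ by rw [← smul_eq_C_mul, map_smul, map_X_pow, smul_zero]

end

/-- Inductive core of part (1) of the abelian Ihara lemma: an `R`-linear functional on `R[X]`
(`R` an integral domain of characteristic zero) vanishing on `(X + C δ)^N - X^N` for all
`N ≥ 1` (with `δ ≠ 0`) vanishes identically. -/
theorem abelian_ihara_dual_vanishing {R : Type*} [CommRing R] [IsDomain R] [CharZero R]
    (δ : R) (hδ : δ ≠ 0) (lam : Polynomial R →ₗ[R] R)
    (h : ∀ N : ℕ, 1 ≤ N → lam ((Polynomial.X + Polynomial.C δ) ^ N - Polynomial.X ^ N) = 0) :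
    ∀ P : Polynomial R, lam P = 0 :=
  abelian_ihara_dual_vanishing_general (IsSMulRegular.of_ne_zero hδ) lam h
end

section
/- Let G be a group, Γ a subgroup of G, H a group, π : G → H a group homomorphism, R a commutative ring, and A an R-module equipped with a right action of H by R-linear automorphisms (written a·h). For a subgroup U of G, let F(U, A) denote the R-module of functions f : G → A such that f(γ·g·u) = f(g)·π(u) for all γ ∈ Γ, g ∈ G, u ∈ U. Suppose the double coset space Γ\G/U is finite with representatives x₁, …, x_h ∈ G. Then the evaluation map f ↦ (f(x₁), …, f(x_h)) is an R-module isomorphism from F(U, A) onto the direct sum over i = 1, …, h of the fixed-point submodules A^(i) := {a ∈ A : a·π(u) = a for all u ∈ x_i⁻¹Γx_i ∩ U}. -/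
open MulOpposite

/-- The space `F(U, A)` of `A`-valued automorphic forms: functions `f : G → A` with
`f (γ * g * u) = f g · π u` for `γ ∈ Γ`, `u ∈ U`; the right action of `H` on `A` by
`R`-linear automorphisms is encoded by a monoid homomorphism `ρ : Hᵐᵒᵖ →* Module.End R A`. -/
def AutForms {R G H A : Type*} [CommRing R] [Group G] [Group H]
    [AddCommGroup A] [Module R A]
    (Γ U : Subgroup G) (π : G →* H) (ρ : Hᵐᵒᵖ →* Module.End R A) :
    Submodule R (G → A) where
  carrier := {f | ∀ γ ∈ Γ, ∀ g : G, ∀ u ∈ U, f (γ * g * u) = ρ (op (π u)) (f g)}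
  add_mem' := by
    intro f₁ f₂ h₁ h₂ γ hγ g u hu
    simp only [Pi.add_apply, h₁ γ hγ g u hu, h₂ γ hγ g u hu, map_add]
  zero_mem' := by
    intro γ hγ g u hu
    simp
  smul_mem' := by
    intro r f hf γ hγ g u hu
    simp only [Pi.smul_apply, hf γ hγ g u hu, map_smul]

/-- The fixed-point submodule `A^(i) = {a ∈ A | a · π u = a for all u ∈ x⁻¹Γx ∩ U}`. -/
def FixedPts {R G H A : Type*} [CommRing R] [Group G] [Group H]
    [AddCommGroup A] [Module R A]
    (Γ U : Subgroup G) (π : G →* H) (ρ : Hᵐᵒᵖ →* Module.End R A) (x : G) :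
    Submodule R A where
  carrier := {a | ∀ u ∈ U, x * u * x⁻¹ ∈ Γ → ρ (op (π u)) a = a}
  add_mem' := by
    intro a b ha hb u hu hγ
    simp only [map_add, ha u hu hγ, hb u hu hγ]
  zero_mem' := by
    intro u hu hγ
    simp
  smul_mem' := by
    intro r a ha u hu hγ
    simp only [map_smul, ha u hu hγ]

/-!
Equivariance determines an automorphic form `f` on the double coset `Γ x U` by `f x`, which
`x⁻¹ Γ x ∩ U` fixes because `x * u = (x * u * x⁻¹) * x`. Conversely, two factorizations
`γ * x * u = γ' * x * u'` of the same element satisfy `u * u'⁻¹ ∈ x⁻¹ Γ x ∩ U`, so for `a` fixed by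
this group `γ * x * u ↦ a · π u` is a well-defined function on `Γ x U`.
-/

section

variable {R G H A : Type*} [CommRing R] [Group G] [Group H] [AddCommGroup A] [Module R A]
  {Γ U : Subgroup G} {π : G →* H} {ρ : Hᵐᵒᵖ →* Module.End R A}

theorem FixedPts.act_eq_of_mul_mul_eq {x : G} {a : A} (ha : a ∈ FixedPts Γ U π ρ x)
    {γ γ' u u' : G} (hγ : γ ∈ Γ) (hγ' : γ' ∈ Γ) (hu : u ∈ U) (hu' : u' ∈ U)
    (h : γ * x * u = γ' * x * u') :
    ρ (op (π u)) a = ρ (op (π u')) a := by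
  have hconj : x * (u * u'⁻¹) * x⁻¹ = γ⁻¹ * γ' :=
    calc x * (u * u'⁻¹) * x⁻¹ = γ⁻¹ * (γ * x * u) * u'⁻¹ * x⁻¹ := by group
      _ = γ⁻¹ * γ' := by rw [h]; group
  have hfix : ρ (op (π (u * u'⁻¹))) a = a :=
    ha _ (U.mul_mem hu (U.inv_mem hu')) (hconj ▸ Γ.mul_mem (Γ.inv_mem hγ) hγ')
  calc ρ (op (π u)) a = ρ (op (π (u * u'⁻¹ * u'))) a := by rw [inv_mul_cancel_right]
    _ = ρ (op (π u')) (ρ (op (π (u * u'⁻¹))) a) := by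
      rw [map_mul π, op_mul, map_mul ρ, Module.End.mul_apply]
    _ = ρ (op (π u')) a := by rw [hfix]

namespace AutForms

theorem apply_mem_fixedPts {f : G → A} (hf : f ∈ AutForms Γ U π ρ) (x : G) :
    f x ∈ FixedPts Γ U π ρ x := fun u hu hconj =>
  calc ρ (op (π u)) (f x) = f (1 * x * u) := (hf 1 Γ.one_mem x u hu).symm
    _ = f (x * u * x⁻¹ * x * 1) := by group
    _ = ρ (op (π 1)) (f x) := hf _ hconj x 1 U.one_mem
    _ = f x := by simp

variable (Γ U π ρ) in
/-- Evaluation of automorphic forms at a family of points `x i`, with values in the fixed-point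
submodules `A^(i)`. -/
def eval {ι : Type*} (x : ι → G) : AutForms Γ U π ρ →ₗ[R] ∀ i, FixedPts Γ U π ρ (x i) :=
  LinearMap.pi fun i =>
    ((LinearMap.proj (x i)).comp (AutForms Γ U π ρ).subtype).codRestrict _
      fun f => apply_mem_fixedPts f.2 (x i)

variable {ι : Type*} {x : ι → G}

theorem eval_injective (hx : ∀ g : G, ∃ i, ∃ γ ∈ Γ, ∃ u ∈ U, g = γ * x i * u) :
    Function.Injective (eval Γ U π ρ x) := by
  intro f₁ f₂ heval
  ext g
  obtain ⟨i, γ, hγ, u, hu, rfl⟩ := hx g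
  have heval_i : (f₁ : G → A) (x i) = (f₂ : G → A) (x i) :=
    congrArg Subtype.val (congrFun heval i)
  rw [f₁.2 γ hγ (x i) u hu, f₂.2 γ hγ (x i) u hu, heval_i]

theorem exists_mem_forall_apply_eq (hx : ∀ g : G, ∃! i, ∃ γ ∈ Γ, ∃ u ∈ U, g = γ * x i * u)
    {a : ι → A} (ha : ∀ i, a i ∈ FixedPts Γ U π ρ (x i)) :
    ∃ f ∈ AutForms Γ U π ρ, ∀ i, f (x i) = a i := by
  have exists_value : ∀ g : G, ∃ b : A, ∀ i, ∀ γ ∈ Γ, ∀ u ∈ U, g = γ * x i * u →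
      b = ρ (op (π u)) (a i) := by
    intro g
    obtain ⟨i, ⟨γ, hγ, u, hu, hg⟩, unique_index⟩ := hx g
    refine ⟨ρ (op (π u)) (a i), fun j γ' hγ' u' hu' hg' => ?_⟩
    obtain rfl : j = i := unique_index j ⟨γ', hγ', u', hu', hg'⟩
    exact FixedPts.act_eq_of_mul_mul_eq (ha j) hγ hγ' hu hu' (hg.symm.trans hg')
  choose f hf using exists_value
  refine ⟨f, fun γ hγ g u hu => ?_, fun i => ?_⟩
  · obtain ⟨i, ⟨γ', hγ', u', hu', hg⟩, -⟩ := hx g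
    have hgu : γ * g * u = γ * γ' * x i * (u' * u) := by rw [hg]; group
    calc f (γ * g * u) = ρ (op (π (u' * u))) (a i) :=
          hf _ i _ (Γ.mul_mem hγ hγ') _ (U.mul_mem hu' hu) hgu
      _ = ρ (op (π u)) (ρ (op (π u')) (a i)) := by
        rw [map_mul π, op_mul, map_mul ρ, Module.End.mul_apply]
      _ = ρ (op (π u)) (f g) := by rw [hf g i γ' hγ' u' hu' hg]
  · simpa using hf (x i) i 1 Γ.one_mem 1 U.one_mem (by simp)

theorem eval_surjective (hx : ∀ g : G, ∃! i, ∃ γ ∈ Γ, ∃ u ∈ U, g = γ * x i * u) :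
    Function.Surjective (eval Γ U π ρ x) := by
  intro a
  obtain ⟨f, hf, hfa⟩ := exists_mem_forall_apply_eq hx fun i => (a i).2
  exact ⟨⟨f, hf⟩, funext fun i => Subtype.ext (hfa i)⟩

end AutForms

end

theorem autForms_eval_equiv_general {R G H A : Type*} [CommRing R] [Group G] [Group H]
    [AddCommGroup A] [Module R A]
    (Γ U : Subgroup G) (π : G →* H) (ρ : Hᵐᵒᵖ →* Module.End R A)
    {ι : Type*} (x : ι → G)
    (hx : ∀ g : G, ∃! i, ∃ γ ∈ Γ, ∃ u ∈ U, g = γ * x i * u) :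
    ∃ e : AutForms Γ U π ρ ≃ₗ[R] (∀ i, FixedPts Γ U π ρ (x i)),
      ∀ (f : AutForms Γ U π ρ) (i : ι), (e f i : A) = (f : G → A) (x i) :=
  ⟨.ofBijective (AutForms.eval Γ U π ρ x)
    ⟨AutForms.eval_injective fun g => (hx g).exists, AutForms.eval_surjective hx⟩,
    fun _ _ => rfl⟩

/-- If `Γ\G/U` is finite with representatives `x₁, …, x_h`, then evaluation at the
representatives is an `R`-module isomorphism from `F(U, A)` onto the direct sum of the
fixed-point submodules `A^(i)` for `x_i⁻¹ Γ x_i ∩ U`. -/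
theorem autForms_eval_equiv {R G H A : Type*} [CommRing R] [Group G] [Group H]
    [AddCommGroup A] [Module R A]
    (Γ U : Subgroup G) (π : G →* H) (ρ : Hᵐᵒᵖ →* Module.End R A)
    {h : ℕ} (x : Fin h → G)
    (hx : ∀ g : G, ∃! i : Fin h, ∃ γ ∈ Γ, ∃ u ∈ U, g = γ * x i * u) :
    ∃ e : AutForms Γ U π ρ ≃ₗ[R] (∀ i : Fin h, FixedPts Γ U π ρ (x i)),
      ∀ (f : AutForms Γ U π ρ) (i : Fin h), (e f i : A) = (f : G → A) (x i) :=
  autForms_eval_equiv_general Γ U π ρ x hx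
end

section
/- Let G be a group, let Γ and V be subgroups of G, and let W be a subgroup of V. Assume the neatness condition that x⁻¹Γx ∩ V = {1} for every x ∈ G. Then for every y ∈ G, the map sending the right coset W·v (for v ∈ V) to the double coset Γ·(y·v⁻¹)·W is a well-defined bijection from the coset space W\V onto the set of double cosets Γ·z·W in Γ\G/W satisfying Γ·z·V = Γ·y·V (that is, onto the fiber over Γ·y·V of the natural surjection Γ\G/W → Γ\G/V). -/
/-!
For `x = y * v⁻¹` and `u = v * v'⁻¹`, the double cosets `ΓxW` and `ΓxuW` agree exactly when
`u ∈ (x⁻¹Γx)W`. By Dedekind's modular law, `(x⁻¹Γx)W ∩ V = (x⁻¹Γx ∩ V)W` when `W ≤ V`, and this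
is `W` as soon as `x⁻¹Γx ∩ V ≤ W`.
-/

section DoubleCosetFiber

open DoubleCoset

variable {G : Type*} [Group G] {H K Γ V W : Subgroup G} {a b k u v v' x y z : G}

theorem setOf_exists_eq_mul_mul (H K : Subgroup G) (a : G) :
    {g : G | ∃ h ∈ H, ∃ k ∈ K, g = h * a * k} = doubleCoset a H K :=
  Set.ext fun _ => mem_doubleCoset.symm

theorem doubleCoset_eq_iff_mem :
    doubleCoset a (H : Set G) K = doubleCoset b H K ↔ a ∈ doubleCoset b (H : Set G) K :=
  ⟨fun h => h ▸ mem_doubleCoset_self H K a, doubleCoset_eq_of_mem⟩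

theorem mul_mem_doubleCoset_iff_exists_conj :
    x * u ∈ doubleCoset x (H : Set G) K ↔ ∃ h ∈ H, x⁻¹ * h * x * u ∈ K := by
  rw [mem_doubleCoset]
  constructor
  · rintro ⟨h, hh, k, hk, hxu⟩
    refine ⟨h⁻¹, H.inv_mem hh, ?_⟩
    rwa [mul_assoc, hxu, show x⁻¹ * h⁻¹ * (h * x * k) = k by group]
  · rintro ⟨h, hh, hk⟩
    exact ⟨h⁻¹, H.inv_mem hh, x⁻¹ * h * x * u, hk, by group⟩

theorem mul_mem_doubleCoset_of_mem (hk : k ∈ K) : a * k ∈ doubleCoset a (H : Set G) K :=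
  mul_mem_doubleCoset_iff_exists_conj.mpr ⟨1, H.one_mem, by simpa using hk⟩

theorem mul_mem_doubleCoset_iff_mem (hWV : W ≤ V)
    (hconj : ∀ γ ∈ Γ, x⁻¹ * γ * x ∈ V → x⁻¹ * γ * x ∈ W) (hu : u ∈ V) :
    x * u ∈ doubleCoset x (Γ : Set G) W ↔ u ∈ W := by
  refine ⟨fun hxu => ?_, mul_mem_doubleCoset_of_mem⟩
  obtain ⟨γ, hγ, hγu⟩ := mul_mem_doubleCoset_iff_exists_conj.mp hxu
  have hγV : x⁻¹ * γ * x ∈ V := (V.mul_mem_cancel_right hu).mp (hWV hγu)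
  exact (W.mul_mem_cancel_left (hconj γ hγ hγV)).mp hγu

theorem doubleCoset_mul_inv_eq_iff (hWV : W ≤ V)
    (hconj : ∀ x ∈ doubleCoset y (Γ : Set G) V, ∀ γ ∈ Γ, x⁻¹ * γ * x ∈ V → x⁻¹ * γ * x ∈ W)
    (hv : v ∈ V) (hv' : v' ∈ V) :
    doubleCoset (y * v⁻¹) (Γ : Set G) W = doubleCoset (y * v'⁻¹) Γ W ↔ v * v'⁻¹ ∈ W := by
  have hyv : y * v⁻¹ ∈ doubleCoset y (Γ : Set G) V := mul_mem_doubleCoset_of_mem (V.inv_mem hv)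
  rw [eq_comm, doubleCoset_eq_iff_mem, show y * v'⁻¹ = y * v⁻¹ * (v * v'⁻¹) by group]
  exact mul_mem_doubleCoset_iff_mem hWV (hconj _ hyv) (V.mul_mem hv (V.inv_mem hv'))

theorem exists_doubleCoset_eq_mul_inv (W : Subgroup G)
    (hzy : doubleCoset z (Γ : Set G) V = doubleCoset y Γ V) :
    ∃ v ∈ V, doubleCoset z (Γ : Set G) W = doubleCoset (y * v⁻¹) Γ W := by
  obtain ⟨γ, hγ, u, hu, rfl⟩ := mem_doubleCoset.mp (doubleCoset_eq_iff_mem.mp hzy)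
  refine ⟨u⁻¹, V.inv_mem hu, doubleCoset_eq_of_mem (mem_doubleCoset.mpr ?_)⟩
  exact ⟨γ, hγ, 1, W.one_mem, by group⟩

theorem doset_fiber_bijection_general (hWV : W ≤ V)
    (hconj : ∀ x ∈ doubleCoset y (Γ : Set G) V, ∀ γ ∈ Γ, x⁻¹ * γ * x ∈ V → x⁻¹ * γ * x ∈ W) :
    (∀ v ∈ V, ∀ v' ∈ V, v * v'⁻¹ ∈ W →
      doubleCoset (y * v⁻¹) (Γ : Set G) W = doubleCoset (y * v'⁻¹) Γ W) ∧
    (∀ v ∈ V, ∀ v' ∈ V,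
      doubleCoset (y * v⁻¹) (Γ : Set G) W = doubleCoset (y * v'⁻¹) Γ W → v * v'⁻¹ ∈ W) ∧
    (∀ v ∈ V, doubleCoset (y * v⁻¹) (Γ : Set G) V = doubleCoset y Γ V) ∧
    (∀ z : G, doubleCoset z (Γ : Set G) V = doubleCoset y Γ V →
      ∃ v ∈ V, doubleCoset z (Γ : Set G) W = doubleCoset (y * v⁻¹) Γ W) :=
  ⟨fun _ hv _ hv' => (doubleCoset_mul_inv_eq_iff hWV hconj hv hv').mpr,
    fun _ hv _ hv' => (doubleCoset_mul_inv_eq_iff hWV hconj hv hv').mp,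
    fun _ hv => doubleCoset_eq_of_mem (mul_mem_doubleCoset_of_mem (V.inv_mem hv)),
    fun _ => exists_doubleCoset_eq_mul_inv W⟩

end DoubleCosetFiber

/-- Under neatness (`x⁻¹Γx ∩ V = 1` for all `x`), for `W ≤ V` and `y ∈ G`, the map
`W·v ↦ Γ·(y·v⁻¹)·W` is a well-defined bijection from `W\V` onto the fiber over `Γ·y·V`
of the natural surjection `Γ\G/W → Γ\G/V`. The four clauses state respectively:
well-definedness, injectivity, that the image lies in the fiber, and surjectivity onto
the fiber. -/
theorem doset_fiber_bijection {G : Type*} [Group G] (Γ V W : Subgroup G) (hWV : W ≤ V)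
    (hneat : ∀ x : G, ∀ γ ∈ Γ, x⁻¹ * γ * x ∈ V → γ = 1) (y : G) :
    (∀ v ∈ V, ∀ v' ∈ V, v * v'⁻¹ ∈ W →
      {g : G | ∃ γ ∈ Γ, ∃ w ∈ W, g = γ * (y * v⁻¹) * w} =
        {g : G | ∃ γ ∈ Γ, ∃ w ∈ W, g = γ * (y * v'⁻¹) * w}) ∧
    (∀ v ∈ V, ∀ v' ∈ V,
      {g : G | ∃ γ ∈ Γ, ∃ w ∈ W, g = γ * (y * v⁻¹) * w} =
        {g : G | ∃ γ ∈ Γ, ∃ w ∈ W, g = γ * (y * v'⁻¹) * w} → v * v'⁻¹ ∈ W) ∧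
    (∀ v ∈ V, {g : G | ∃ γ ∈ Γ, ∃ u ∈ V, g = γ * (y * v⁻¹) * u} =
        {g : G | ∃ γ ∈ Γ, ∃ u ∈ V, g = γ * y * u}) ∧
    (∀ z : G, {g : G | ∃ γ ∈ Γ, ∃ u ∈ V, g = γ * z * u} =
        {g : G | ∃ γ ∈ Γ, ∃ u ∈ V, g = γ * y * u} →
      ∃ v ∈ V, {g : G | ∃ γ ∈ Γ, ∃ w ∈ W, g = γ * z * w} =
        {g : G | ∃ γ ∈ Γ, ∃ w ∈ W, g = γ * (y * v⁻¹) * w}) := by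
  simp only [setOf_exists_eq_mul_mul]
  exact doset_fiber_bijection_general hWV fun x _ γ hγ hx => by simp [hneat x γ hγ hx]
end

section
/- Let R₀ be a Noetherian, integrally closed integral domain of Krull dimension d. Let R₁ be a commutative R₀-algebra that is integral over R₀ and torsion-free as an R₀-module. Then R₁ has Krull dimension d and is equidimensional of dimension d: for every minimal prime ideal 𝔭 of R₁, the quotient ring R₁/𝔭 has Krull dimension d. -/
/-!
An integral extension of rings preserves Krull dimension: chains of primes lift by lying over and
going up, and contract to chains of the same length by incomparability. A minimal prime consists of
zero divisors, whereas a nonzero element of the domain `R₀` acts injectively on the torsion-free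
module `R₁`; so a minimal prime `𝔭` of `R₁` contracts to zero, and both `R₁` and `R₁ ⧸ 𝔭` are
integral extensions of `R₀`.
-/

section KrullDim

variable {R S : Type*} [CommRing R] [CommRing S] [Algebra R S]

theorem ringKrullDim_le_of_hasGoingUp_of_comap_surjective [Algebra.HasGoingUp R S]
    (h : Function.Surjective (PrimeSpectrum.comap (algebraMap R S))) :
    ringKrullDim R ≤ ringKrullDim S := by
  refine iSup_le fun l ↦ ?_
  obtain ⟨P, hP⟩ := h l.head
  have : P.asIdeal.LiesOver l.head.asIdeal := ⟨congrArg PrimeSpectrum.asIdeal hP.symm⟩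
  obtain ⟨L, hL, -⟩ := Ideal.exists_ltSeries_of_hasGoingUp l P.asIdeal
  exact hL ▸ Order.LTSeries.length_le_krullDim L

theorem strictMono_primeSpectrumComap_of_isIntegral [Algebra.IsIntegral R S] :
    StrictMono (PrimeSpectrum.comap (algebraMap R S)) :=
  fun P _ hPQ ↦ Ideal.IsIntegral.comap_lt_comap (I := P.asIdeal) hPQ

variable (R S) in
theorem ringKrullDim_eq_of_isIntegral_of_faithfulSMul [Algebra.IsIntegral R S] [FaithfulSMul R S] :
    ringKrullDim S = ringKrullDim R :=
  le_antisymm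
    (Order.krullDim_le_of_strictMono _ strictMono_primeSpectrumComap_of_isIntegral)
    (ringKrullDim_le_of_hasGoingUp_of_comap_surjective (Algebra.IsIntegral.comap_surjective R S))

end KrullDim

section TorsionFree

variable {R S : Type*} [CommRing R] [CommRing S] [Algebra R S] [Module.IsTorsionFree R S]

theorem algebraMap_mem_nonZeroDivisors_of_isTorsionFree {r : R} (hr : r ∈ nonZeroDivisors R) :
    algebraMap R S r ∈ nonZeroDivisors S := by
  refine mem_nonZeroDivisors_iff_right.mpr fun x hx ↦ ?_
  rw [mul_comm, ← Algebra.smul_def] at hx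
  exact (isRegular_iff_mem_nonZeroDivisors.mpr hr).smul_eq_zero_iff_right.mp hx

variable (R) in
theorem disjoint_under_nonZeroDivisors_of_mem_minimalPrimes {𝔭 : Ideal S}
    (h𝔭 : 𝔭 ∈ minimalPrimes S) : Disjoint (𝔭.under R : Set R) (nonZeroDivisors R) :=
  Set.disjoint_left.mpr fun _ hr𝔭 hr ↦
    notMem_nonZeroDivisors_of_mem_mem_minimalPrimes (Ideal.mem_comap.mp hr𝔭) h𝔭
      (algebraMap_mem_nonZeroDivisors_of_isTorsionFree hr)

variable (R) in
theorem faithfulSMul_quotient_of_mem_minimalPrimes [NoZeroDivisors R] {𝔭 : Ideal S}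
    (h𝔭 : 𝔭 ∈ minimalPrimes S) : FaithfulSMul R (S ⧸ 𝔭) := by
  rw [faithfulSMul_iff_algebraMap_injective, injective_iff_map_eq_zero]
  intro r hr
  have hr𝔭 : algebraMap R S r ∈ 𝔭 := Ideal.Quotient.eq_zero_iff_mem.mp hr
  by_contra hr₀
  exact Set.disjoint_left.mp (disjoint_under_nonZeroDivisors_of_mem_minimalPrimes R h𝔭) hr𝔭
    (mem_nonZeroDivisors_of_ne_zero hr₀)

end TorsionFree

theorem integral_torsionFree_equidimensional_general {R₀ R₁ : Type*}
    [CommRing R₀] [IsDomain R₀] [CommRing R₁] [Nontrivial R₁] [Algebra R₀ R₁]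
    [Algebra.IsIntegral R₀ R₁] [Module.IsTorsionFree R₀ R₁] :
    ringKrullDim R₁ = ringKrullDim R₀ ∧
      ∀ 𝔭 ∈ minimalPrimes R₁, ringKrullDim (R₁ ⧸ 𝔭) = ringKrullDim R₀ := by
  refine ⟨ringKrullDim_eq_of_isIntegral_of_faithfulSMul R₀ R₁, fun 𝔭 h𝔭 ↦ ?_⟩
  have : FaithfulSMul R₀ (R₁ ⧸ 𝔭) := faithfulSMul_quotient_of_mem_minimalPrimes R₀ h𝔭
  exact ringKrullDim_eq_of_isIntegral_of_faithfulSMul R₀ (R₁ ⧸ 𝔭)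

/-- Newton's commutative-algebra lemma: if `R₀` is a Noetherian, integrally closed
(normal) integral domain of Krull dimension `d`, and `R₁` is a (nonzero) commutative
`R₀`-algebra that is integral over `R₀` and torsion-free as an `R₀`-module, then `R₁`
has Krull dimension `d` and is equidimensional of dimension `d`: every quotient by a
minimal prime has Krull dimension `d`. -/
theorem integral_torsionFree_equidimensional {R₀ R₁ : Type*}
    [CommRing R₀] [IsDomain R₀] [IsNoetherianRing R₀] [IsIntegrallyClosed R₀]
    (d : ℕ) (hd : ringKrullDim R₀ = (d : WithBot ℕ∞))
    [CommRing R₁] [Nontrivial R₁] [Algebra R₀ R₁] [Algebra.IsIntegral R₀ R₁]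
    [NoZeroSMulDivisors R₀ R₁] :
    ringKrullDim R₁ = (d : WithBot ℕ∞) ∧
      ∀ 𝔭 ∈ minimalPrimes R₁, ringKrullDim (R₁ ⧸ 𝔭) = (d : WithBot ℕ∞) :=
  hd ▸ integral_torsionFree_equidimensional_general
end

section
/- Let R be a Noetherian integral domain with fraction field F. Let M and L be finitely generated projective R-modules and let i⁺ : M → L be an R-linear map. Write M* = Hom_R(M, R) and L* = Hom_R(L, R), and let j : L* → M* be the dual map λ ↦ λ ∘ i⁺. Let S ⊆ M* be the submodule of all μ ∈ M* whose image in M* ⊗_R F lies in the image of j ⊗ F : L* ⊗_R F → M* ⊗_R F. Then every μ ∈ S vanishes on ker(i⁺), and the induced evaluation map ker(i⁺) → Hom_R(M*/S, R), sending m to the functional (μ mod S) ↦ μ(m), is an isomorphism of R-modules. -/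
/-- The submodule `S ⊆ M*` of functionals whose image in `M* ⊗ F` (where `F` is the
fraction field of `R`) lies in the image of `j ⊗ F`, with `j = (i⁺)* : L* → M*` the dual
of `i⁺ : M → L`. -/
noncomputable def satSubmodule {R M L : Type*} [CommRing R]
    [AddCommGroup M] [Module R M] [AddCommGroup L] [Module R L]
    (iplus : M →ₗ[R] L) : Submodule R (Module.Dual R M) :=
  Submodule.comap ((TensorProduct.mk R (Module.Dual R M) (FractionRing R)).flip 1)
    (LinearMap.range (LinearMap.rTensor (FractionRing R) iplus.dualMap))

/-!
Write `f` for `i⁺` and `S` for `satSubmodule f`. Evaluation at `m ∈ ker f` kills `j(L*)`, hence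
kills `S` since `R` embeds in its total ring of fractions; thus
`range j ≤ S ≤ (ker f).dualAnnihilator`. Both bounds have `ker f` as their common kernel in `M`, the
lower one because functionals separate the points of `L`, so `S` has too. Finally, for reflexive `M`
the common kernel of any `S ≤ M*` is the annihilator of `S` in `M** = M`, that is, the dual of
`M* ⧸ S`.
-/

section

open Module Submodule TensorProduct

variable {R M L : Type*} [CommRing R] [AddCommGroup M] [Module R M] [AddCommGroup L] [Module R L]

theorem apply_eq_zero_of_tmul_one_mem_range_rTensor {K N P : Type*} [Semiring K] [Algebra R K]
    [FaithfulSMul R K] [AddCommMonoid N] [Module R N] [AddCommMonoid P] [Module R P]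
    {g : N →ₗ[R] P} {h : Dual R P} (hg : h ∘ₗ g = 0) {x : P}
    (hx : x ⊗ₜ[R] (1 : K) ∈ LinearMap.range (g.rTensor K)) : h x = 0 := by
  obtain ⟨t, ht⟩ := hx
  have tmul_eq_zero : h x ⊗ₜ[R] (1 : K) = 0 := by
    rw [← LinearMap.rTensor_tmul, ← ht, ← LinearMap.rTensor_comp_apply, hg,
      LinearMap.rTensor_zero, LinearMap.zero_apply]
  apply FaithfulSMul.algebraMap_injective R K
  rw [map_zero, Algebra.algebraMap_eq_smul_one, ← TensorProduct.lid_tmul, tmul_eq_zero, map_zero]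

theorem range_dualMap_le_satSubmodule (f : M →ₗ[R] L) :
    LinearMap.range f.dualMap ≤ satSubmodule f := by
  rintro _ ⟨ν, rfl⟩
  exact ⟨ν ⊗ₜ 1, LinearMap.rTensor_tmul ..⟩

theorem satSubmodule_le_dualAnnihilator_ker (f : M →ₗ[R] L) :
    satSubmodule f ≤ (LinearMap.ker f).dualAnnihilator := by
  intro μ hμ
  rw [mem_dualAnnihilator]
  intro m hm
  have eval_comp_dualMap : Dual.eval R M m ∘ₗ f.dualMap = 0 := by
    ext ν
    simp [LinearMap.mem_ker.mp hm]
  exact apply_eq_zero_of_tmul_one_mem_range_rTensor eval_comp_dualMap hμ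

theorem dualCoannihilator_range_dualMap (hL : Function.Injective (Dual.eval R L))
    (f : M →ₗ[R] L) :
    (LinearMap.range f.dualMap).dualCoannihilator = LinearMap.ker f := by
  rw [LinearMap.dualCoannihilator_range_eq_ker_flip]
  exact LinearMap.ker_comp_of_ker_eq_bot f (LinearMap.ker_eq_bot.mpr hL)

theorem dualCoannihilator_satSubmodule (hL : Function.Injective (Dual.eval R L))
    (f : M →ₗ[R] L) : (satSubmodule f).dualCoannihilator = LinearMap.ker f := by
  apply le_antisymm
  · rw [← dualCoannihilator_range_dualMap hL f]
    exact dualCoannihilator_anti (range_dualMap_le_satSubmodule f)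
  · exact le_dualAnnihilator_iff_le_dualCoannihilator.mp (satSubmodule_le_dualAnnihilator_ker f)

/-- For a reflexive module `M` and `S ≤ M*`, the common kernel of `S` is the dual of `M* ⧸ S`,
through evaluation. -/
noncomputable def dualCoannihilatorEquivDualQuot [IsReflexive R M] (S : Submodule R (Dual R M)) :
    S.dualCoannihilator ≃ₗ[R] Dual R (Dual R M ⧸ S) :=
  (evalEquiv R M).ofSubmodule' S.dualAnnihilator ≪≫ₗ S.dualQuotEquivDualAnnihilator.symm

theorem dualCoannihilatorEquivDualQuot_apply_mk [IsReflexive R M] (S : Submodule R (Dual R M))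
    (m : S.dualCoannihilator) (μ : Dual R M) :
    dualCoannihilatorEquivDualQuot S m (Submodule.Quotient.mk μ) = μ m :=
  rfl

theorem ker_levelLowering_dual_iso_general [IsReflexive R M]
    (hL : Function.Injective (Dual.eval R L)) (f : M →ₗ[R] L) :
    (∀ μ ∈ satSubmodule f, ∀ m ∈ LinearMap.ker f, μ m = 0) ∧
    ∃ e : LinearMap.ker f ≃ₗ[R] Dual R (Dual R M ⧸ satSubmodule f),
      ∀ (m : LinearMap.ker f) (μ : Dual R M), e m (Submodule.Quotient.mk μ) = μ m := by
  refine ⟨fun μ hμ ↦ (mem_dualAnnihilator μ).mp (satSubmodule_le_dualAnnihilator_ker f hμ), ?_⟩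
  rw [← dualCoannihilator_satSubmodule hL f]
  exact ⟨dualCoannihilatorEquivDualQuot _, dualCoannihilatorEquivDualQuot_apply_mk _⟩

end

/-- The duality pairing `P₃`: for `R` a Noetherian domain, `M`, `L` finitely generated
projective `R`-modules and `i⁺ : M → L`, every `μ ∈ S = M* ∩ j(L* ⊗ F)` vanishes on
`ker i⁺`, and the induced evaluation map identifies `ker i⁺` with `Hom_R(M*/S, R)`. -/
theorem ker_levelLowering_dual_iso {R M L : Type*} [CommRing R] [IsDomain R]
    [IsNoetherianRing R]
    [AddCommGroup M] [Module R M] [Module.Finite R M] [Module.Projective R M]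
    [AddCommGroup L] [Module R L] [Module.Finite R L] [Module.Projective R L]
    (iplus : M →ₗ[R] L) :
    (∀ μ ∈ satSubmodule iplus, ∀ m ∈ LinearMap.ker iplus, μ m = 0) ∧
    ∃ e : LinearMap.ker iplus ≃ₗ[R] ((Module.Dual R M ⧸ satSubmodule iplus) →ₗ[R] R),
      ∀ (m : LinearMap.ker iplus) (μ : Module.Dual R M),
        e m (Submodule.Quotient.mk μ) = μ m :=
  ker_levelLowering_dual_iso_general (Module.eval_apply_injective R) iplus
end

section
/- Let E be a field and σ : E → E a ring automorphism with σ ∘ σ = id and σ ≠ id, and assume char E ≠ 2. Let n ≥ 1 and let J be an invertible n × n matrix over E that is σ-hermitian: (J.map σ)ᵀ = J, where J.map σ applies σ to every entry. Then for every u ∈ E with u·σ(u) = 1 there exists an n × n matrix g over E such that (g.map σ)ᵀ · J · g = J and det g = u. Equivalently, the determinant map from the unitary group U(J)(E) = {g : (g.map σ)ᵀ J g = J} to the norm-one group {u ∈ E : u·σ(u) = 1} is surjective. -/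
open Matrix

/-!
Choose a vector `v` that is anisotropic for the hermitian form `h(x, y) = xᴴ J y`. The
quasi-reflection `x ↦ x + c h(v, x) v` scales `v` by `1 + c h(v, v)` and fixes the orthogonal
complement of `v`, so `1 + c h(v, v)` is its determinant, and it is unitary as soon as that scalar
has norm one; one solves `1 + c h(v, v) = u` for `c`. An anisotropic vector exists when `J ≠ 0` and
some `t + star t` is nonzero: otherwise polarization gives `h(x, y) + star h(x, y) = 0` for all
`x, y`, while `h` takes every value. If the trace `t ↦ t + star t` is zero, then `2 = 0` and `star`
is trivial, so `u² = 1` forces `u = 1`.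
-/

section QuasiReflection

variable {R ι : Type*} [CommRing R] [StarRing R] [Fintype ι] {J : Matrix ι ι R}

lemma star_star_dotProduct_mulVec (hJ : J.IsHermitian) (x y : ι → R) :
    star (star x ⬝ᵥ J *ᵥ y) = star y ⬝ᵥ J *ᵥ x := by
  rw [star_dotProduct, star_star, star_mulVec, hJ.eq, dotProduct_mulVec]

variable [DecidableEq ι]

/-- The matrix of `x ↦ x + c h(v, x) v`, where `h(x, y) = xᴴ J y` is the sesquilinear form with
Gram matrix `J`. For suitable `c` it is the unitary map that scales `v` by a given scalar of norm
one and fixes the vectors orthogonal to `v`. -/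
def quasiReflection (J : Matrix ι ι R) (v : ι → R) (c : R) : Matrix ι ι R :=
  1 + c • vecMulVec v (star v ᵥ* J)

lemma det_quasiReflection (J : Matrix ι ι R) (v : ι → R) (c : R) :
    (quasiReflection J v c).det = 1 + c * (star v ⬝ᵥ J *ᵥ v) := by
  rw [quasiReflection, ← smul_vecMulVec, vecMulVec_eq Unit,
    det_one_add_replicateCol_mul_replicateRow, dotProduct_smul, dotProduct_mulVec, smul_eq_mul]

lemma conjTranspose_quasiReflection (hJ : J.IsHermitian) (v : ι → R) (c : R) :
    (quasiReflection J v c)ᴴ = 1 + star c • vecMulVec (J *ᵥ v) (star v) := by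
  rw [quasiReflection, conjTranspose_add, conjTranspose_one, conjTranspose_smul,
    conjTranspose_vecMulVec, star_vecMul, star_star, hJ.eq]

lemma conjTranspose_quasiReflection_mul_mul (hJ : J.IsHermitian) {v : ι → R} {c : R}
    (hc : c + star c + star c * c * (star v ⬝ᵥ J *ᵥ v) = 0) :
    (quasiReflection J v c)ᴴ * J * quasiReflection J v c = J := by
  set P := vecMulVec (J *ᵥ v) (star v ᵥ* J) with hP
  have left_mul : (quasiReflection J v c)ᴴ * J = J + star c • P := by
    rw [conjTranspose_quasiReflection hJ, add_mul, one_mul, Matrix.smul_mul, vecMulVec_mul]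
  have mul_right : J * vecMulVec v (star v ᵥ* J) = P := mul_vecMulVec ..
  have mul_right' : P * vecMulVec v (star v ᵥ* J) = (star v ⬝ᵥ J *ᵥ v) • P := by
    rw [hP, vecMulVec_mul_vecMulVec, dotProduct_mulVec, vecMulVec_smul]
  calc (quasiReflection J v c)ᴴ * J * quasiReflection J v c
      = J + (c + star c + star c * c * (star v ⬝ᵥ J *ᵥ v)) • P := by
        rw [left_mul, quasiReflection, mul_add, mul_one, Matrix.mul_smul, add_mul,
          Matrix.smul_mul, mul_right, mul_right']
        module
    _ = J := by rw [hc, zero_smul, add_zero]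

end QuasiReflection

lemma exists_add_star_ne_zero {R : Type*} [CommRing R] [IsReduced R] [StarRing R] {u : R}
    (hu : u * star u = 1) (hu1 : u ≠ 1) : ∃ t : R, t + star t ≠ 0 := by
  by_contra! h
  have two_eq_zero : (1 : R) + 1 = 0 := by simpa using h 1
  have sq_eq_zero : (u - 1) ^ 2 = 0 := by
    linear_combination u * h u - hu - u * two_eq_zero
  exact hu1 (sub_eq_zero.mp (pow_eq_zero_iff two_ne_zero |>.mp sq_eq_zero))

section Field

variable {E ι : Type*} [Field E] [StarRing E] [Fintype ι] {J : Matrix ι ι E}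

lemma exists_star_dotProduct_mulVec_ne_zero (hJ : J.IsHermitian) (hJ0 : J ≠ 0) {t : E}
    (ht : t + star t ≠ 0) : ∃ v : ι → E, star v ⬝ᵥ J *ᵥ v ≠ 0 := by
  classical
  by_contra! isotropic
  have polarization (x y : ι → E) : star x ⬝ᵥ J *ᵥ y + star (star x ⬝ᵥ J *ᵥ y) = 0 := by
    have := isotropic (x + y)
    simpa [mulVec_add, isotropic, star_star_dotProduct_mulVec hJ, add_comm] using this
  obtain ⟨i, j, hij⟩ : ∃ i j, J i j ≠ 0 := by
    contrapose! hJ0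
    exact Matrix.ext hJ0
  have eq_t : star (Pi.single i 1) ⬝ᵥ J *ᵥ Pi.single j (t / J i j) = t := by
    simp only [Pi.star_single, star_one, mulVec_single, single_one_dotProduct, Pi.smul_apply,
      col_apply, op_smul_eq_mul, mul_div_cancel₀ _ hij]
  exact ht (eq_t ▸ polarization _ _)

theorem unitaryGroup_det_surjective_general [DecidableEq ι] [Nonempty ι] (hJ : J.IsHermitian)
    {u : E} (hu : u * star u = 1) : ∃ g : Matrix ι ι E, gᴴ * J * g = J ∧ g.det = u := by
  rcases eq_or_ne u 1 with rfl | hu1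
  · exact ⟨1, by simp, det_one⟩
  rcases eq_or_ne J 0 with rfl | hJ0
  · obtain ⟨i⟩ := ‹Nonempty ι›
    exact ⟨diagonal (Pi.mulSingle i u), by simp, by simp [det_diagonal]⟩
  obtain ⟨t, ht⟩ := exists_add_star_ne_zero hu hu1
  obtain ⟨v, hv⟩ := exists_star_dotProduct_mulVec_ne_zero hJ hJ0 ht
  have star_self := star_star_dotProduct_mulVec hJ v v
  refine ⟨quasiReflection J v ((u - 1) / (star v ⬝ᵥ J *ᵥ v)),
    conjTranspose_quasiReflection_mul_mul hJ ?_, ?_⟩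
  · rw [star_div₀, star_sub, star_one, star_self]
    field_simp
    linear_combination hu
  · rw [det_quasiReflection, div_mul_cancel₀ _ hv, add_sub_cancel]

end Field

/-- The star ring structure on a commutative semiring given by an involution `σ`; it makes
`(A.map σ)ᵀ` the conjugate transpose of `A` definitionally. -/
abbrev starRingOfInvolutive {R : Type*} [CommSemiring R] (σ : R →+* R)
    (hσ : Function.Involutive σ) : StarRing R where
  star := σ
  star_involutive := hσ
  star_mul x y := by rw [map_mul, mul_comm]
  star_add := map_add σ

/-- Surjectivity of the determinant from the unitary group of a nondegenerate
`σ`-hermitian form onto the norm-one group: for every `u` with `u·σ(u) = 1` there is a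
matrix `g` with `(g.map σ)ᵀ · J · g = J` and `det g = u`. Here `σ` is a nontrivial ring
involution of the field `E`, `char E ≠ 2`, and `J` is an invertible `σ`-hermitian
matrix. -/
theorem unitaryGroup_det_surjective {E : Type*} [Field E] (σ : E →+* E)
    (hσ2 : ∀ x : E, σ (σ x) = x) (hσ : σ ≠ RingHom.id E) (h2 : (2 : E) ≠ 0)
    {n : ℕ} (hn : 1 ≤ n) (J : Matrix (Fin n) (Fin n) E) (hJ : IsUnit J)
    (hherm : (J.map σ)ᵀ = J) :
    ∀ u : E, u * σ u = 1 →
      ∃ g : Matrix (Fin n) (Fin n) E, (g.map σ)ᵀ * J * g = J ∧ g.det = u := by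
  let := starRingOfInvolutive σ hσ2
  have : Nonempty (Fin n) := Fin.pos_iff_nonempty.mp hn
  exact fun u hu => unitaryGroup_det_surjective_general hherm hu
end

section
/- Let E be a field and σ : E → E a ring automorphism with σ ∘ σ = id and σ ≠ id. Let n ≥ 1 and let J be an invertible n × n matrix over E that is σ-hermitian: (J.map σ)ᵀ = J, where J.map σ applies σ to every entry. Then there exists a vector v ∈ Eⁿ that is anisotropic for J, i.e. Σ_{i,j} σ(vᵢ)·J_{ij}·vⱼ ≠ 0. -/
open Matrix

/-!
Suppose every vector is isotropic for a form `B`, `σ`-linear on the left and `τ`-linear on the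
right. Polarization makes `B` skew, so a scalar `c` can be carried from the left argument to the
right one: `σ c • B x y = τ c • B x y`. As soon as `σ c ≠ τ c` for some `c`, this forces `B = 0`.
A `σ`-hermitian form is the case `τ = id`.
-/

section Sesquilinear

variable {R S M N : Type*} [CommSemiring R] [CommRing S] [AddCommMonoid M] [Module R M]
  [AddCommGroup N] [Module S N] {σ τ : R →+* S} {B : M →ₛₗ[σ] M →ₛₗ[τ] N}

theorem sub_smul_apply_eq_zero_of_isAlt (hB : B.IsAlt) (c : R) (x y : M) :
    (σ c - τ c) • B x y = 0 := by
  have h : σ c • B x y = τ c • B x y :=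
    calc σ c • B x y = B (c • x) y := by rw [B.map_smulₛₗ₂]
      _ = -B y (c • x) := (hB.neg y (c • x)).symm
      _ = τ c • -B y x := by rw [map_smulₛₗ, smul_neg]
      _ = τ c • B x y := by rw [hB.neg]
  rw [sub_smul, h, sub_self]

theorem eq_zero_of_isAlt_of_ne [NoZeroDivisors S] [Module.IsTorsionFree S N] (hB : B.IsAlt)
    (hστ : σ ≠ τ) : B = 0 := by
  obtain ⟨c, hc⟩ := DFunLike.ne_iff.mp hστ
  ext x y
  exact (smul_eq_zero_iff_right (sub_ne_zero.mpr hc)).mp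
    (sub_smul_apply_eq_zero_of_isAlt hB c x y)

end Sesquilinear

theorem exists_anisotropic_vector_general {R S ι : Type*} [CommSemiring R] [CommRing S]
    [NoZeroDivisors S] [Fintype ι] {σ τ : R →+* S} (hστ : σ ≠ τ) {J : Matrix ι ι S} (hJ : J ≠ 0) :
    ∃ v : ι → R, ∑ i, ∑ j, σ (v i) * J i j * τ (v j) ≠ 0 := by
  classical
  by_contra! h
  have hB : (toLinearMapₛₗ₂' S σ τ J).IsAlt := fun v ↦ by
    rw [← h v, toLinearMapₛₗ₂'_apply]
    simp only [smul_eq_mul, mul_comm, mul_left_comm]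
  exact hJ ((LinearEquiv.map_eq_zero_iff _).mp (eq_zero_of_isAlt_of_ne hB hστ))

/-- A nondegenerate `σ`-hermitian form (for a nontrivial involution `σ` of the field `E`)
on a nonzero space admits an anisotropic vector: there is `v ∈ Eⁿ` with
`Σ_{i,j} σ(vᵢ)·J_{ij}·vⱼ ≠ 0`. -/
theorem exists_anisotropic_vector {E : Type*} [Field E] (σ : E →+* E)
    (hσ2 : ∀ x : E, σ (σ x) = x) (hσ : σ ≠ RingHom.id E)
    {n : ℕ} (hn : 1 ≤ n) (J : Matrix (Fin n) (Fin n) E) (hJ : IsUnit J)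
    (hherm : (J.map σ)ᵀ = J) :
    ∃ v : Fin n → E, ∑ i : Fin n, ∑ j : Fin n, σ (v i) * J i j * v j ≠ 0 :=
  have : NeZero n := ⟨Nat.one_le_iff_ne_zero.mp hn⟩
  exists_anisotropic_vector_general hσ hJ.ne_zero
end

section
/- Let H be a commutative ring, let c, d ∈ H with d a unit, and let T ∈ H. Let M₀ and M₁ be H-modules with M₀ finitely generated, and let A : M₀ → M₁ and B : M₁ → M₀ be H-linear maps such that B(A(m)) = (T + c)·m for all m ∈ M₀. Define the H-linear map Φ : M₀ ⊕ M₁ → M₀ ⊕ M₁ by Φ(f₀, f₁) = (c·f₀ + B(f₁), A(f₀) + d·f₁). If 𝔭 is a prime ideal of H such that T − c·(d − 1) ∈ 𝔭 and 𝔭 lies in the support of M₀ (i.e. the localization (M₀)_𝔭 is nonzero), then 𝔭 lies in the support of coker Φ (i.e. (coker Φ)_𝔭 ≠ 0). -/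
/-!
Write `a = T + c`, so that `B ∘ A = a` and `Φ` is the block matrix `(c, B; A, d)`, whose formal
determinant is `c * d - a`. The inclusion `M₀ → M₀ × M₁` and the first row `(d, -B)` of the
adjugate matrix induce maps between `M₀ ⧸ (a - c * d) M₀` and `coker Φ` whose composites, in both
orders, are multiplication by `d`. Hence the two modules have the same support away from `V(d)`,
and as `M₀` is finitely generated the support of the first is `Supp M₀ ∩ V(a - c * d)`.
-/

section Support

variable {R M N : Type*} [CommRing R] [AddCommGroup M] [Module R M] [AddCommGroup N] [Module R N]

theorem mem_support_of_comp_eq_smul_id {f : M →ₗ[R] N} {g : N →ₗ[R] M} {r : R}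
    (hgf : g ∘ₗ f = r • LinearMap.id) {𝔭 : PrimeSpectrum R} (hr : r ∉ 𝔭.asIdeal)
    (h𝔭 : 𝔭 ∈ Module.support R M) : 𝔭 ∈ Module.support R N := by
  rw [Module.mem_support_iff'] at h𝔭 ⊢
  obtain ⟨m, hm⟩ := h𝔭
  refine ⟨f m, fun s hs hsfm ↦ hm (s * r) (𝔭.asIdeal.primeCompl.mul_mem hs hr) ?_⟩
  calc (s * r) • m = s • g (f m) := by rw [mul_smul, ← LinearMap.comp_apply, hgf]; rfl
    _ = g (s • f m) := (map_smul g s (f m)).symm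
    _ = 0 := by rw [hsfm, map_zero]

theorem mem_support_iff_of_comp_eq_smul_id {f : M →ₗ[R] N} {g : N →ₗ[R] M} {r : R}
    (hgf : g ∘ₗ f = r • LinearMap.id) (hfg : f ∘ₗ g = r • LinearMap.id) {𝔭 : PrimeSpectrum R}
    (hr : r ∉ 𝔭.asIdeal) : 𝔭 ∈ Module.support R M ↔ 𝔭 ∈ Module.support R N :=
  ⟨mem_support_of_comp_eq_smul_id hgf hr, mem_support_of_comp_eq_smul_id hfg hr⟩

theorem mem_support_quotSMulTop_iff [Module.Finite R M] {r : R} {𝔭 : PrimeSpectrum R} :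
    𝔭 ∈ Module.support R (QuotSMulTop r M) ↔ 𝔭 ∈ Module.support R M ∧ r ∈ 𝔭.asIdeal := by
  rw [Module.support_quotSMulTop, Set.mem_inter_iff, PrimeSpectrum.mem_zeroLocus,
    Set.singleton_subset_iff, SetLike.mem_coe]

end Support

section BlockMap

open scoped Pointwise

variable {R M N : Type*} [CommRing R] [AddCommGroup M] [Module R M] [AddCommGroup N] [Module R N]

/-- The endomorphism of `M × N` with block matrix `(c, B; A, d)`, where the scalars `c` and `d`
stand for the corresponding homotheties. -/
def blockMap (c d : R) (A : M →ₗ[R] N) (B : N →ₗ[R] M) : M × N →ₗ[R] M × N :=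
  (c • LinearMap.fst R M N + B ∘ₗ LinearMap.snd R M N).prod
    (A ∘ₗ LinearMap.fst R M N + d • LinearMap.snd R M N)

/-- The first row `(d, -B)` of the adjugate of the block matrix `(c, B; A, d)`. -/
def blockAdjugateRow (d : R) (B : N →ₗ[R] M) : M × N →ₗ[R] M :=
  d • LinearMap.fst R M N - B ∘ₗ LinearMap.snd R M N

variable {a c d : R} {A : M →ₗ[R] N} {B : N →ₗ[R] M}

@[simp]
theorem blockMap_apply (z : M × N) :
    blockMap c d A B z = (c • z.1 + B z.2, A z.1 + d • z.2) := rfl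

@[simp]
theorem blockAdjugateRow_apply (z : M × N) : blockAdjugateRow d B z = d • z.1 - B z.2 := rfl

theorem blockAdjugateRow_blockMap (hBA : ∀ m, B (A m) = a • m) (z : M × N) :
    blockAdjugateRow d B (blockMap c d A B z) = (a - c * d) • -z.1 := by
  simp only [blockMap_apply, blockAdjugateRow_apply, map_add, map_smul, hBA]
  module

theorem blockMap_neg_smul_apply (hBA : ∀ m, B (A m) = a • m) (m : M) :
    blockMap c d A B (-(d • m), A m) = ((a - c * d) • m, 0) := by
  ext
  · simp only [blockMap_apply, hBA]
    module
  · simp only [blockMap_apply, map_neg, map_smul, neg_add_cancel]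

theorem blockMap_zero_apply (z : M × N) :
    blockMap c d A B (0, z.2) = d • z - (blockAdjugateRow d B z, 0) := by
  ext <;> simp

theorem range_blockMap_le_comap_blockAdjugateRow (hBA : ∀ m, B (A m) = a • m) :
    LinearMap.range (blockMap c d A B) ≤
      ((a - c * d) • (⊤ : Submodule R M)).comap (blockAdjugateRow d B) := by
  rintro _ ⟨z, rfl⟩
  rw [Submodule.mem_comap, blockAdjugateRow_blockMap hBA]
  exact Submodule.smul_mem_pointwise_smul _ _ _ Submodule.mem_top

theorem smul_top_le_comap_inl_range_blockMap (hBA : ∀ m, B (A m) = a • m) :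
    (a - c * d) • (⊤ : Submodule R M) ≤
      (LinearMap.range (blockMap c d A B)).comap (LinearMap.inl R M N) := by
  intro x hx
  obtain ⟨m, -, rfl⟩ := (Submodule.mem_smul_pointwise_iff_exists _ _ _).mp hx
  exact ⟨(-(d • m), A m), blockMap_neg_smul_apply hBA m⟩

/-- The map `coker (c, B; A, d) → M ⧸ (a - c * d) M` induced by the adjugate row `(d, -B)`. -/
def cokerBlockMapToQuot (c d : R) (hBA : ∀ m, B (A m) = a • m) :
    (M × N) ⧸ LinearMap.range (blockMap c d A B) →ₗ[R] QuotSMulTop (a - c * d) M :=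
  Submodule.mapQ _ _ (blockAdjugateRow d B) (range_blockMap_le_comap_blockAdjugateRow hBA)

/-- The map `M ⧸ (a - c * d) M → coker (c, B; A, d)` induced by the inclusion `M → M × N`. -/
def quotToCokerBlockMap (c d : R) (hBA : ∀ m, B (A m) = a • m) :
    QuotSMulTop (a - c * d) M →ₗ[R] (M × N) ⧸ LinearMap.range (blockMap c d A B) :=
  Submodule.mapQ _ _ (LinearMap.inl R M N) (smul_top_le_comap_inl_range_blockMap hBA)

theorem cokerBlockMapToQuot_comp_quotToCokerBlockMap (hBA : ∀ m, B (A m) = a • m) :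
    cokerBlockMapToQuot c d hBA ∘ₗ quotToCokerBlockMap c d hBA = d • LinearMap.id := by
  refine Submodule.linearMap_qext _ (LinearMap.ext fun m ↦ ?_)
  have hrow : blockAdjugateRow d B (LinearMap.inl R M N m) = d • m := by simp
  exact congrArg (Submodule.mkQ _) hrow

theorem quotToCokerBlockMap_comp_cokerBlockMapToQuot (hBA : ∀ m, B (A m) = a • m) :
    quotToCokerBlockMap c d hBA ∘ₗ cokerBlockMapToQuot c d hBA = d • LinearMap.id := by
  refine Submodule.linearMap_qext _ (LinearMap.ext fun z ↦ ?_)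
  have hdiff : d • z - (blockAdjugateRow d B z, 0) ∈ LinearMap.range (blockMap c d A B) :=
    ⟨(0, z.2), blockMap_zero_apply z⟩
  exact ((Submodule.Quotient.eq _).mpr hdiff).symm

end BlockMap

theorem prime_mem_support_coker_of_levelRaising_general {H : Type*} [CommRing H]
    (c d T : H)
    {M₀ M₁ : Type*} [AddCommGroup M₀] [Module H M₀] [AddCommGroup M₁] [Module H M₁]
    [Module.Finite H M₀]
    (A : M₀ →ₗ[H] M₁) (B : M₁ →ₗ[H] M₀)
    (hBA : ∀ m : M₀, B (A m) = (T + c) • m)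
    (Φ : (M₀ × M₁) →ₗ[H] (M₀ × M₁))
    (hΦ : ∀ (f₀ : M₀) (f₁ : M₁), Φ (f₀, f₁) = (c • f₀ + B f₁, A f₀ + d • f₁))
    (𝔭 : PrimeSpectrum H) (hd : d ∉ 𝔭.asIdeal) :
    𝔭 ∈ Module.support H ((M₀ × M₁) ⧸ LinearMap.range Φ) ↔
      𝔭 ∈ Module.support H M₀ ∧ T - c * (d - 1) ∈ 𝔭.asIdeal := by
  obtain rfl : Φ = blockMap c d A B := LinearMap.ext fun z ↦ hΦ z.1 z.2
  have hdet : T - c * (d - 1) = (T + c) - c * d := by ring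
  rw [hdet, ← mem_support_quotSMulTop_iff]
  exact mem_support_iff_of_comp_eq_smul_id
    (quotToCokerBlockMap_comp_cokerBlockMapToQuot hBA)
    (cokerBlockMapToQuot_comp_quotToCokerBlockMap hBA) hd

/-- Commutative-algebra core of the level raising proposition: let `c, d, T ∈ H` with `d`
a unit, `M₀` finitely generated, `A : M₀ → M₁`, `B : M₁ → M₀` with `B ∘ A = (T + c)·id`,
and `Φ(f₀, f₁) = (c·f₀ + B f₁, A f₀ + d·f₁)`. If a prime `𝔭` contains `T − c·(d − 1)` and
lies in the support of `M₀`, then `𝔭` lies in the support of `coker Φ`. -/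
theorem prime_mem_support_coker_of_levelRaising {H : Type*} [CommRing H]
    (c d T : H) (hd : IsUnit d)
    {M₀ M₁ : Type*} [AddCommGroup M₀] [Module H M₀] [AddCommGroup M₁] [Module H M₁]
    [Module.Finite H M₀]
    (A : M₀ →ₗ[H] M₁) (B : M₁ →ₗ[H] M₀)
    (hBA : ∀ m : M₀, B (A m) = (T + c) • m)
    (Φ : (M₀ × M₁) →ₗ[H] (M₀ × M₁))
    (hΦ : ∀ (f₀ : M₀) (f₁ : M₁), Φ (f₀, f₁) = (c • f₀ + B f₁, A f₀ + d • f₁))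
    (𝔭 : PrimeSpectrum H) (hT : T - c * (d - 1) ∈ 𝔭.asIdeal)
    (hsupp : 𝔭 ∈ Module.support H M₀) :
    𝔭 ∈ Module.support H ((M₀ × M₁) ⧸ LinearMap.range Φ) := by
  have hd𝔭 : d ∉ 𝔭.asIdeal := fun h ↦ 𝔭.isPrime.ne_top (Ideal.eq_top_of_isUnit_mem _ h hd)
  exact (prime_mem_support_coker_of_levelRaising_general c d T A B hBA Φ hΦ 𝔭 hd𝔭).mpr ⟨hsupp, hT⟩
end

section
/- Let p be a prime, n ≥ 2, R an integral domain, and χ₁, …, χ_n : ℤ_pˣ → Rˣ group homomorphisms. Let Iw ⊆ GL_n(ℤ_p) be the Iwahori subgroup (matrices invertible over ℤ_p whose strictly lower-triangular entries lie in pℤ_p), and let B ⊆ Iw be the subgroup of upper-triangular matrices. Suppose there exists a function f : Iw → R, not identically zero, such that f(h·b) = f(h) · Πᵢ χᵢ(b_{ii}) for all h ∈ Iw and b ∈ B, and f(g·h) = f(h) for all h ∈ Iw and all g ∈ Iw with det g = 1. Then χ₁ = χ₂ = ⋯ = χ_n. -/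
/-!
The group `SL_n ∩ Iw` is normal in `Iw`, so left invariance under it is the same as right
invariance. Evaluating at a point where `f ≠ 0`, the weight `∏ i, χ i (u i)` is therefore trivial
on the diagonal matrices `diag(u)` of determinant one. Taking `u` to be `a` in position `i` and
`a⁻¹` in position `j` gives `χ i a = χ j a`.
-/

open Matrix

theorem prod_monoidHom_apply_mulSingle {ι M : Type*} {T : ι → Type*} [Fintype ι] [DecidableEq ι]
    [∀ i, CommMonoid (T i)] [CommMonoid M] (χ : ∀ i, T i →* M) (i : ι) (a : T i) :
    ∏ k, χ k (Pi.mulSingle i a k) = χ i a := by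
  simpa [Pi.monoidHomMulEquiv] using
    DFunLike.congr_fun (congr_fun ((Pi.monoidHomMulEquiv T M).apply_symm_apply χ) i) a

theorem monoidHom_eq_of_forall_prod_eq_one {ι T M : Type*} [Fintype ι] [CommGroup T]
    [CommGroup M] {χ : ι → T →* M}
    (hχ : ∀ u : ι → T, ∏ k, u k = 1 → ∏ k, χ k (u k) = 1) (i j : ι) : χ i = χ j := by
  classical
  ext a
  let u : ι → T := Pi.mulSingle i a / Pi.mulSingle j a
  have hu : ∏ k, u k = 1 := by
    simp [u, Finset.prod_div_distrib]
  have hχu : ∏ k, χ k (u k) = χ i a / χ j a := by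
    simp [u, Finset.prod_div_distrib, prod_monoidHom_apply_mulSingle]
  exact div_eq_one.mp (hχu.symm.trans (hχ u hu))

theorem apply_mul_eq_of_normal_of_left_invariant {G X : Type*} [Group G] {N : Subgroup G}
    [N.Normal] {f : G → X} (hf : ∀ g ∈ N, ∀ h, f (g * h) = f h) (h : G) {g : G} (hg : g ∈ N) :
    f (h * g) = f h := by
  simpa using hf (h * g * h⁻¹) (Subgroup.Normal.conj_mem inferInstance g hg h) h

section Subgroups

variable {ι A : Type*} [Fintype ι] [LinearOrder ι] [CommRing A]

variable (ι A) in
/-- The Borel subgroup of upper-triangular matrices in `GL ι A`. -/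
def borelSubgroup : Subgroup (GL ι A) where
  __ := (blockTriangularSubsemiring A (id : ι → ι)).toSubmonoid.comap (Units.coeHom _)
  inv_mem' {g} hg := by
    have := g.invertible
    change (↑g⁻¹ : Matrix ι ι A).IsUpperTriangular
    rw [GeneralLinearGroup.coe_inv]
    exact blockTriangular_inv_of_blockTriangular hg

theorem mem_borelSubgroup {g : GL ι A} : g ∈ borelSubgroup ι A ↔ g.val.IsUpperTriangular :=
  Iff.rfl

variable (ι) in
/-- The Iwahori subgroup of `GL ι A` attached to an ideal `I`: the matrices that become upper
triangular over `A ⧸ I`. The usual Iwahori subgroup of `GL_n(ℤ_p)` is the case `I = (p)`. -/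
def iwahoriSubgroup (I : Ideal A) : Subgroup (GL ι A) :=
  (borelSubgroup ι (A ⧸ I)).comap (GeneralLinearGroup.map (Ideal.Quotient.mk I))

theorem mem_iwahoriSubgroup {I : Ideal A} {g : GL ι A} :
    g ∈ iwahoriSubgroup ι I ↔ ∀ i j, j < i → g i j ∈ I := by
  simp [iwahoriSubgroup, mem_borelSubgroup, BlockTriangular, Ideal.Quotient.eq_zero_iff_mem]

theorem mem_iwahoriSubgroup_span_singleton {ϖ : A} {g : GL ι A} :
    g ∈ iwahoriSubgroup ι (Ideal.span {ϖ}) ↔ ∀ i j, j < i → ϖ ∣ g i j := by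
  simp only [mem_iwahoriSubgroup, Ideal.mem_span_singleton]

/-- The diagonal torus of `GL ι A`, parametrised by its diagonal entries and viewed inside the
Iwahori subgroup attached to `I`. -/
def iwahoriTorus (I : Ideal A) : (ι → Aˣ) →* iwahoriSubgroup ι I :=
  ((Units.map (diagonalRingHom ι A : (ι → A) →* Matrix ι ι A)).comp
    MulEquiv.piUnits.symm.toMonoidHom).codRestrict _ fun _ =>
      mem_iwahoriSubgroup.mpr fun _ _ hji => by simp [MulEquiv.piUnits, hji.ne']

theorem coe_iwahoriTorus (I : Ideal A) (u : ι → Aˣ) :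
    (iwahoriTorus I u).val.val = diagonal fun i => (u i : A) :=
  rfl

theorem det_iwahoriTorus (I : Ideal A) (u : ι → Aˣ) :
    (iwahoriTorus I u).val.det = ∏ i, u i := by
  ext
  simp [coe_iwahoriTorus]

theorem weight_central_of_abelian_invariance_general {R : Type*} [CommMonoidWithZero R]
    [IsCancelMulZero R] (I : Ideal A) (χ : ι → (Aˣ →* Rˣ)) (f : iwahoriSubgroup ι I → R)
    (hne : ∃ h, f h ≠ 0)
    (hright : ∀ h u, f (h * iwahoriTorus I u) = f h * ∏ i, (χ i (u i) : R))
    (hleft : ∀ g h, g.val.det = 1 → f (g * h) = f h) (i j : ι) : χ i = χ j := by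
  obtain ⟨h, hfh⟩ := hne
  refine monoidHom_eq_of_forall_prod_eq_one (fun u hu => ?_) i j
  let iwahoriSL := GeneralLinearGroup.det.ker.subgroupOf (iwahoriSubgroup ι I)
  have hu_mem : iwahoriTorus I u ∈ iwahoriSL := (det_iwahoriTorus I u).trans hu
  have hinv : f (h * iwahoriTorus I u) = f h :=
    apply_mul_eq_of_normal_of_left_invariant (fun g hg k => hleft g k hg) h hu_mem
  have hweight : ∏ k, (χ k (u k) : R) = 1 := (mul_eq_left₀ hfh).mp ((hright h u).symm.trans hinv)
  exact Units.ext (by simpa using hweight)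

end Subgroups

/-- Centrality of the weight in part (2) of the abelian Ihara lemma: if a function `f`
on the Iwahori subgroup `Iw ⊆ GL_n(ℤ_p)` (matrices invertible over `ℤ_p` with strictly
lower-triangular entries divisible by `p`), not identically zero on `Iw`, transforms
under right translation by upper-triangular `b ∈ B` through `Πᵢ χᵢ(bᵢᵢ)` and is invariant
under left translation by determinant-one elements of `Iw`, then `χ₁ = ⋯ = χ_n`. -/
theorem weight_central_of_abelian_invariance {p : ℕ} [Fact p.Prime] {n : ℕ} (hn : 2 ≤ n)
    {R : Type*} [CommRing R] [IsDomain R]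
    (χ : Fin n → (ℤ_[p]ˣ →* Rˣ))
    (f : Matrix (Fin n) (Fin n) ℤ_[p] → R)
    (hne : ∃ h : Matrix (Fin n) (Fin n) ℤ_[p],
      (IsUnit h ∧ ∀ i j : Fin n, j < i → (p : ℤ_[p]) ∣ h i j) ∧ f h ≠ 0)
    (hright : ∀ (h b : Matrix (Fin n) (Fin n) ℤ_[p]) (u : Fin n → ℤ_[p]ˣ),
      (IsUnit h ∧ ∀ i j : Fin n, j < i → (p : ℤ_[p]) ∣ h i j) →
      (∀ i j : Fin n, j < i → b i j = 0) → (∀ i : Fin n, b i i = u i) →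
      f (h * b) = f h * ∏ i : Fin n, ((χ i (u i) : Rˣ) : R))
    (hleft : ∀ g h : Matrix (Fin n) (Fin n) ℤ_[p],
      (IsUnit g ∧ ∀ i j : Fin n, j < i → (p : ℤ_[p]) ∣ g i j) → g.det = 1 →
      (IsUnit h ∧ ∀ i j : Fin n, j < i → (p : ℤ_[p]) ∣ h i j) →
      f (g * h) = f h) :
    ∀ i j : Fin n, χ i = χ j := by
  obtain ⟨_, ⟨⟨h, rfl⟩, hI⟩, hfh⟩ := hne
  have isIwahori (g : iwahoriSubgroup (Fin n) (Ideal.span {(p : ℤ_[p])})) :=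
    And.intro g.val.isUnit (mem_iwahoriSubgroup_span_singleton.mp g.prop)
  exact weight_central_of_abelian_invariance_general _ χ (fun g => f g.val.val)
    ⟨⟨h, mem_iwahoriSubgroup_span_singleton.mpr hI⟩, hfh⟩
    (fun g u => hright g.val _ u (isIwahori g) (fun _ _ hji => diagonal_apply_ne _ hji.ne')
      fun i => diagonal_apply_eq (fun k => (u k : ℤ_[p])) i)
    fun g g' hg => hleft g.val g'.val (isIwahori g) (congrArg Units.val hg) (isIwahori g')
end
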